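/- Let I be the 2×2 identity over ℂ, X = !![0,1;1,0], CNOT = !![1,0,0,0;0,1,0,0;0,0,0,1;0,0,1,0], Pplus = (1/2) • !![1,1;1,1] (the projector onto |+⟩ = (|0⟩+|1⟩)/√2), and P0 = !![1,0;0,0] (the projector onto |0⟩). Then for all a, b ∈ ℂ and all v ∈ ℂ² (states on qubits 1 and 4, with the Bell state (|00⟩+|11⟩)/√2 on qubits 2 and 3): ((I ⊗ₖ P0 ⊗ₖ Pplus ⊗ₖ I) * (CNOT ⊗ₖ CNOT)).mulVec (![a,b] ⊗ₜ ((1/√2) • ![1,0,0,1]) ⊗ₜ v) = (1/2) • (![a,0] ⊗ₜ (((1/√2) • ![1,1]) ⊗ₜ v) + ![0,b] ⊗ₜ (((1/√2) • ![1,1]) ⊗ₜ (X.mulVec v))); that is, the +1,+1-outcome branch of the remote-XOR protocol leaves qubits 1 and 4 in the state CNOT₁₄((a|0⟩+b|1⟩) ⊗ v), with |0⟩ on qubit 2 and |+⟩ on qubit 3. -/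

import Mathlib

open Matrix

noncomputable def X : Matrix (Fin 2) (Fin 2) ℂ := !![0, 1; 1, 0]
noncomputable def I2 : Matrix (Fin 2) (Fin 2) ℂ := 1

/-- Controlled-NOT with control on the first qubit. -/
noncomputable def CNOT : Matrix (Fin 4) (Fin 4) ℂ :=
  !![1, 0, 0, 0; 0, 1, 0, 0; 0, 0, 0, 1; 0, 0, 1, 0]

/-- The projector onto `|+⟩ = (|0⟩+|1⟩)/√2`. -/
noncomputable def Pplus : Matrix (Fin 2) (Fin 2) ℂ := (1 / 2 : ℂ) • !![1, 1; 1, 1]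

/-- The projector onto `|0⟩`. -/
noncomputable def P0 : Matrix (Fin 2) (Fin 2) ℂ := !![1, 0; 0, 0]

/-- Kronecker product of square matrices, reindexed to `Fin (m * n)`
with lexicographic (big-endian) ordering of the basis. -/
noncomputable def mkron {m n : ℕ} (A : Matrix (Fin m) (Fin m) ℂ)
    (B : Matrix (Fin n) (Fin n) ℂ) : Matrix (Fin (m * n)) (Fin (m * n)) ℂ :=
  Matrix.reindex finProdFinEquiv finProdFinEquiv (Matrix.kroneckerMap (· * ·) A B)

infixl:100 " ⊗ₖ " => mkron

/-- Kronecker product of vectors, with lexicographic (big-endian) ordering. -/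
noncomputable def tkron {m n : ℕ} (v : Fin m → ℂ) (w : Fin n → ℂ) : Fin (m * n) → ℂ :=
  fun i => v (finProdFinEquiv.symm i).1 * w (finProdFinEquiv.symm i).2

infixl:100 " ⊗ₜ " => tkron

/-!
Regrouping the four qubits as `(1 2)(3 4)` makes the projected circuit a Kronecker product of two
two-qubit operators. On qubits 1 and 2, CNOT followed by `|0⟩⟨0|` on the target keeps the components
in which the two bits agree. On qubits 3 and 4, CNOT followed by `|+⟩⟨+|` on the control applies the
controlled `X` coherently and leaves the control in `|+⟩`. Expanding the Bell state as
`|00⟩ + |11⟩`, the bit of qubit 1 thus decides whether `X` acts on qubit 4.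
-/

section Kronecker

variable {l m n : ℕ}

theorem tkron_finProdFinEquiv (v : Fin m → ℂ) (w : Fin n → ℂ) (i : Fin m) (j : Fin n) :
    (v ⊗ₜ w) (finProdFinEquiv (i, j)) = v i * w j := by
  simp only [tkron, Equiv.symm_apply_apply]

theorem mkron_finProdFinEquiv (A : Matrix (Fin m) (Fin m) ℂ) (B : Matrix (Fin n) (Fin n) ℂ)
    (i i' : Fin m) (j j' : Fin n) :
    (A ⊗ₖ B) (finProdFinEquiv (i, j)) (finProdFinEquiv (i', j')) = A i i' * B j j' := by
  simp only [mkron, reindex_apply, submatrix_apply, kroneckerMap_apply, Equiv.symm_apply_apply]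

theorem tkron_add (v : Fin m → ℂ) (w w' : Fin n → ℂ) : v ⊗ₜ (w + w') = v ⊗ₜ w + v ⊗ₜ w' :=
  funext fun _ => mul_add _ _ _

theorem add_tkron (v v' : Fin m → ℂ) (w : Fin n → ℂ) : (v + v') ⊗ₜ w = v ⊗ₜ w + v' ⊗ₜ w :=
  funext fun _ => add_mul _ _ _

theorem tkron_smul (c : ℂ) (v : Fin m → ℂ) (w : Fin n → ℂ) : v ⊗ₜ (c • w) = c • (v ⊗ₜ w) :=
  funext fun _ => mul_left_comm _ _ _

theorem smul_tkron (c : ℂ) (v : Fin m → ℂ) (w : Fin n → ℂ) : (c • v) ⊗ₜ w = c • (v ⊗ₜ w) :=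
  funext fun _ => mul_assoc _ _ _

theorem mkron_mulVec_tkron (A : Matrix (Fin m) (Fin m) ℂ) (B : Matrix (Fin n) (Fin n) ℂ)
    (v : Fin m → ℂ) (w : Fin n → ℂ) : (A ⊗ₖ B) *ᵥ (v ⊗ₜ w) = (A *ᵥ v) ⊗ₜ (B *ᵥ w) := by
  ext k
  obtain ⟨⟨i, j⟩, rfl⟩ := finProdFinEquiv.surjective k
  simp only [mulVec, dotProduct, ← finProdFinEquiv.sum_comp, Fintype.sum_prod_type,
    tkron_finProdFinEquiv, mkron_finProdFinEquiv, Finset.sum_mul_sum, mul_mul_mul_comm]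

theorem cast_finProdFinEquiv_assoc (i : Fin l) (j : Fin m) (k : Fin n) :
    Fin.cast (mul_assoc l m n).symm (finProdFinEquiv (i, finProdFinEquiv (j, k))) =
      finProdFinEquiv (finProdFinEquiv (i, j), k) := by
  ext
  simp only [Fin.val_cast, finProdFinEquiv_apply_val]
  ring

theorem tkron_assoc (u : Fin l → ℂ) (v : Fin m → ℂ) (w : Fin n → ℂ) :
    (u ⊗ₜ v ⊗ₜ w) ∘ Fin.cast (mul_assoc l m n).symm = u ⊗ₜ (v ⊗ₜ w) := by
  ext x
  obtain ⟨⟨i, y⟩, rfl⟩ := finProdFinEquiv.surjective x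
  obtain ⟨⟨j, k⟩, rfl⟩ := finProdFinEquiv.surjective y
  simp only [Function.comp_apply, cast_finProdFinEquiv_assoc, tkron_finProdFinEquiv, mul_assoc]

theorem mkron_assoc (A : Matrix (Fin l) (Fin l) ℂ) (B : Matrix (Fin m) (Fin m) ℂ)
    (C : Matrix (Fin n) (Fin n) ℂ) :
    (A ⊗ₖ B ⊗ₖ C).submatrix (Fin.cast (mul_assoc l m n).symm) (Fin.cast (mul_assoc l m n).symm) =
      A ⊗ₖ (B ⊗ₖ C) := by
  ext x x'
  obtain ⟨⟨i, y⟩, rfl⟩ := finProdFinEquiv.surjective x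
  obtain ⟨⟨j, k⟩, rfl⟩ := finProdFinEquiv.surjective y
  obtain ⟨⟨i', y'⟩, rfl⟩ := finProdFinEquiv.surjective x'
  obtain ⟨⟨j', k'⟩, rfl⟩ := finProdFinEquiv.surjective y'
  simp only [submatrix_apply, cast_finProdFinEquiv_assoc, mkron_finProdFinEquiv, mul_assoc]

end Kronecker

theorem I2_mulVec (v : Fin 2 → ℂ) : I2 *ᵥ v = v :=
  one_mulVec v

theorem X_mulVec (v : Fin 2 → ℂ) : X *ᵥ v = ![v 1, v 0] := by
  ext i
  fin_cases i <;> simp [X, vecHead, vecTail]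

theorem P0_mulVec (v : Fin 2 → ℂ) : P0 *ᵥ v = v 0 • ![1, 0] := by
  ext i
  fin_cases i <;> simp [P0, vecHead]

theorem Pplus_mulVec (v : Fin 2 → ℂ) : Pplus *ᵥ v = ((v 0 + v 1) / 2) • ![1, 1] := by
  ext i
  fin_cases i <;> simp [Pplus, vecHead, vecTail] <;> ring

theorem tkron_eq_vec (u v : Fin 2 → ℂ) :
    u ⊗ₜ v = ![u 0 * v 0, u 0 * v 1, u 1 * v 0, u 1 * v 1] := by
  ext i
  fin_cases i <;> rfl

theorem CNOT_mulVec_tkron (u v : Fin 2 → ℂ) :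
    CNOT *ᵥ (u ⊗ₜ v) = ![u 0, 0] ⊗ₜ v + ![0, u 1] ⊗ₜ (X *ᵥ v) := by
  rw [X_mulVec, tkron_eq_vec, tkron_eq_vec, tkron_eq_vec]
  ext i
  fin_cases i <;> simp [CNOT, mulVec, dotProduct, Fin.sum_univ_four]

theorem mkron_I2_P0_mulVec_CNOT_tkron (u v : Fin 2 → ℂ) :
    (I2 ⊗ₖ P0) *ᵥ (CNOT *ᵥ (u ⊗ₜ v)) = ![u 0 * v 0, u 1 * v 1] ⊗ₜ ![1, 0] := by
  have hsum : ![u 0 * v 0, u 1 * v 1] = v 0 • ![u 0, 0] + v 1 • ![0, u 1] := by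
    simp [mul_comm]
  rw [CNOT_mulVec_tkron, mulVec_add, mkron_mulVec_tkron, mkron_mulVec_tkron, hsum]
  simp only [I2_mulVec, P0_mulVec, X_mulVec, tkron_smul, add_tkron, smul_tkron, cons_val_zero]

theorem mkron_Pplus_I2_mulVec_CNOT_tkron (u v : Fin 2 → ℂ) :
    (Pplus ⊗ₖ I2) *ᵥ (CNOT *ᵥ (u ⊗ₜ v)) =
      (1 / 2 : ℂ) • (![1, 1] ⊗ₜ (u 0 • v + u 1 • (X *ᵥ v))) := by
  rw [CNOT_mulVec_tkron, mulVec_add, mkron_mulVec_tkron, mkron_mulVec_tkron]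
  simp only [I2_mulVec, Pplus_mulVec, smul_tkron, tkron_add, tkron_smul, smul_add, smul_smul]
  simp [div_eq_inv_mul]

theorem bell_eq_tkron_add_tkron :
    (![1, 0, 0, 1] : Fin 4 → ℂ) = ![1, 0] ⊗ₜ ![1, 0] + ![0, 1] ⊗ₜ ![0, 1] := by
  simp [tkron_eq_vec]

-- At numeral dimensions the `Fin.cast`s in `tkron_assoc` and `mkron_assoc` vanish definitionally.
theorem tkron_middle_assoc_qubits (p q r s : Fin 2 → ℂ) :
    (p ⊗ₜ (q ⊗ₜ r) ⊗ₜ s : Fin 16 → ℂ) = p ⊗ₜ q ⊗ₜ (r ⊗ₜ s) :=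
  calc (p ⊗ₜ (q ⊗ₜ r) ⊗ₜ s : Fin 16 → ℂ)
      = p ⊗ₜ q ⊗ₜ r ⊗ₜ s := congrArg (fun t : Fin 8 → ℂ => t ⊗ₜ s) (tkron_assoc p q r).symm
    _ = p ⊗ₜ q ⊗ₜ (r ⊗ₜ s) := tkron_assoc (p ⊗ₜ q) r s

theorem tkron_bell_tkron (c : ℂ) (u v : Fin 2 → ℂ) :
    (u ⊗ₜ (c • (![1, 0, 0, 1] : Fin 4 → ℂ)) ⊗ₜ v : Fin 16 → ℂ) =
      c • (u ⊗ₜ ![1, 0] ⊗ₜ (![1, 0] ⊗ₜ v) + u ⊗ₜ ![0, 1] ⊗ₜ (![0, 1] ⊗ₜ v)) := by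
  rw [← tkron_middle_assoc_qubits, ← tkron_middle_assoc_qubits, bell_eq_tkron_add_tkron]
  simp only [tkron_smul, smul_tkron, tkron_add, add_tkron]

theorem branch_mulVec_tkron (p q r s : Fin 2 → ℂ) :
    ((I2 ⊗ₖ P0 ⊗ₖ Pplus ⊗ₖ I2) * (CNOT ⊗ₖ CNOT) : Matrix (Fin 16) (Fin 16) ℂ) *ᵥ
        (p ⊗ₜ q ⊗ₜ (r ⊗ₜ s)) =
      (1 / 2 : ℂ) • (![p 0 * q 0, p 1 * q 1] ⊗ₜ ![1, 0] ⊗ₜ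
        (![1, 1] ⊗ₜ (r 0 • s + r 1 • (X *ᵥ s)))) := by
  have hproj : (I2 ⊗ₖ P0 ⊗ₖ Pplus ⊗ₖ I2 : Matrix (Fin 16) (Fin 16) ℂ) =
      I2 ⊗ₖ P0 ⊗ₖ (Pplus ⊗ₖ I2) := mkron_assoc (I2 ⊗ₖ P0) Pplus I2
  calc
    _ = (I2 ⊗ₖ P0 ⊗ₖ (Pplus ⊗ₖ I2)) *ᵥ ((CNOT ⊗ₖ CNOT) *ᵥ (p ⊗ₜ q ⊗ₜ (r ⊗ₜ s))) := by
      rw [← mulVec_mulVec, hproj]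
    _ = (I2 ⊗ₖ P0 ⊗ₖ (Pplus ⊗ₖ I2)) *ᵥ ((CNOT *ᵥ (p ⊗ₜ q)) ⊗ₜ (CNOT *ᵥ (r ⊗ₜ s))) :=
      congrArg _ (mkron_mulVec_tkron CNOT CNOT _ _)
    _ = ((I2 ⊗ₖ P0) *ᵥ (CNOT *ᵥ (p ⊗ₜ q))) ⊗ₜ ((Pplus ⊗ₖ I2) *ᵥ (CNOT *ᵥ (r ⊗ₜ s))) :=
      mkron_mulVec_tkron _ _ _ _
    _ = _ := by
      rw [mkron_I2_P0_mulVec_CNOT_tkron, mkron_Pplus_I2_mulVec_CNOT_tkron, tkron_smul]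

/-- The `+1, +1`-outcome branch of the remote-XOR protocol: with a Bell pair on qubits
2 and 3, after `CNOT(1→2)` and `CNOT(3→4)`, projecting qubit 2 onto `|0⟩` and qubit 3
onto `|+⟩` leaves qubits 1 and 4 in the state `CNOT₁₄((a|0⟩+b|1⟩) ⊗ v)`, with `|0⟩` on
qubit 2 and `|+⟩` on qubit 3. -/
theorem remote_xor_plus_plus_branch (a b : ℂ) (v : Fin 2 → ℂ) :
    (((I2 ⊗ₖ P0 ⊗ₖ Pplus ⊗ₖ I2) * (CNOT ⊗ₖ CNOT) : Matrix (Fin 16) (Fin 16) ℂ)).mulVec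
        (((![a, b] : Fin 2 → ℂ) ⊗ₜ
          ((1 / (Real.sqrt 2 : ℂ)) • (![1, 0, 0, 1] : Fin 4 → ℂ)) ⊗ₜ v : Fin 16 → ℂ)) =
      (1 / 2 : ℂ) •
        (((![a, 0] : Fin 2 → ℂ) ⊗ₜ (![1, 0] : Fin 2 → ℂ) ⊗ₜ
            (((1 / (Real.sqrt 2 : ℂ)) • (![1, 1] : Fin 2 → ℂ)) ⊗ₜ v) : Fin 16 → ℂ) +
         ((![0, b] : Fin 2 → ℂ) ⊗ₜ (![1, 0] : Fin 2 → ℂ) ⊗ₜ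
            (((1 / (Real.sqrt 2 : ℂ)) • (![1, 1] : Fin 2 → ℂ)) ⊗ₜ X.mulVec v) :
            Fin 16 → ℂ)) := by
  rw [tkron_bell_tkron, mulVec_smul, mulVec_add, branch_mulVec_tkron, branch_mulVec_tkron]
  simp only [cons_val_zero, cons_val_one, mul_one, mul_zero, one_smul, zero_smul, add_zero,
    zero_add, smul_tkron, tkron_smul]
  rw [← smul_add, ← smul_add, smul_comm]
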